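/- The ℂ-vector space of homogeneous degree-5 polynomials p ∈ ℂ[z₀,…,z₄] with p ∘ g₁ = p and p ∘ g₂ = p is exactly the span of the six polynomials θ₁, θ₂, θ₃, η₂, η₃, η₄, and these six polynomials are linearly independent; in particular this invariant space has dimension 6. -/

import Mathlib

open MvPolynomial

/-- `ω = exp(2πi/5)`, a primitive fifth root of unity. -/
noncomputable def ω : ℂ := Complex.exp (2 * Real.pi * Complex.I / 5)

/-- Substitution `p ↦ p ∘ g₁` where `g₁(z₀,z₁,z₂,z₃,z₄) = (z₄,z₀,z₁,z₂,z₃)`. -/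
noncomputable def compG1 : MvPolynomial (Fin 5) ℂ →ₐ[ℂ] MvPolynomial (Fin 5) ℂ :=
  aeval fun i : Fin 5 => X (i - 1)

/-- Substitution `p ↦ p ∘ g₂` where `g₂(z₀,…,z₄) = (z₀, ω z₁, ω² z₂, ω³ z₃, ω⁴ z₄)`. -/
noncomputable def compG2 : MvPolynomial (Fin 5) ℂ →ₐ[ℂ] MvPolynomial (Fin 5) ℂ :=
  aeval fun i : Fin 5 => C (ω ^ (i : ℕ)) * X i

/-- `θ₁ = z₀⁵+z₁⁵+z₂⁵+z₃⁵+z₄⁵` -/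
noncomputable def θ1 : MvPolynomial (Fin 5) ℂ :=
  X 0 ^ 5 + X 1 ^ 5 + X 2 ^ 5 + X 3 ^ 5 + X 4 ^ 5

/-- `θ₂ = z₀z₁z₂z₃z₄` -/
noncomputable def θ2 : MvPolynomial (Fin 5) ℂ := X 0 * X 1 * X 2 * X 3 * X 4

/-- `θ₃ = z₀³z₁z₄ + z₀z₁³z₂ + z₀z₃z₄³ + z₁z₂³z₃ + z₂z₃³z₄` -/
noncomputable def θ3 : MvPolynomial (Fin 5) ℂ :=
  X 0 ^ 3 * X 1 * X 4 + X 0 * X 1 ^ 3 * X 2 + X 0 * X 3 * X 4 ^ 3 +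
    X 1 * X 2 ^ 3 * X 3 + X 2 * X 3 ^ 3 * X 4

/-- `η₂ = z₀²z₁z₂² + z₁²z₂z₃² + z₂²z₃z₄² + z₃²z₄z₀² + z₄²z₀z₁²` -/
noncomputable def η2 : MvPolynomial (Fin 5) ℂ :=
  X 0 ^ 2 * X 1 * X 2 ^ 2 + X 1 ^ 2 * X 2 * X 3 ^ 2 + X 2 ^ 2 * X 3 * X 4 ^ 2 +
    X 3 ^ 2 * X 4 * X 0 ^ 2 + X 4 ^ 2 * X 0 * X 1 ^ 2

/-- `η₃ = z₀²z₁²z₃ + z₁²z₂²z₄ + z₂²z₃²z₀ + z₃²z₄²z₁ + z₄²z₀²z₂` -/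
noncomputable def η3 : MvPolynomial (Fin 5) ℂ :=
  X 0 ^ 2 * X 1 ^ 2 * X 3 + X 1 ^ 2 * X 2 ^ 2 * X 4 + X 2 ^ 2 * X 3 ^ 2 * X 0 +
    X 3 ^ 2 * X 4 ^ 2 * X 1 + X 4 ^ 2 * X 0 ^ 2 * X 2

/-- `η₄ = z₀³z₂z₃ + z₁³z₃z₄ + z₂³z₄z₀ + z₃³z₀z₁ + z₄³z₁z₂` -/
noncomputable def η4 : MvPolynomial (Fin 5) ℂ :=
  X 0 ^ 3 * X 2 * X 3 + X 1 ^ 3 * X 3 * X 4 + X 2 ^ 3 * X 4 * X 0 +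
    X 3 ^ 3 * X 0 * X 1 + X 4 ^ 3 * X 1 * X 2

/-!
A polynomial is invariant under the diagonal map `g₂` if and only if each of its monomials has
exponent `a` with `∑ i aᵢ ≡ 0 (mod 5)`. The rotation `g₁` changes this sum by the degree, so it acts
on the span of these monomials in degree `5`, and averaging shows that the invariants are the image
of this span under `1 + g₁ + ⋯ + g₁⁴`. Up to rotation there are only six such exponents; the sums
over their orbits are the six generators, which are independent because the orbits are disjoint.
-/

section Transfer

variable {K V : Type*} [AddCommGroup V]

/-- The transfer (unnormalised Reynolds operator) `1 + T + ⋯ + T ^ (n - 1)` of the cyclic group of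
order `n` acting through an endomorphism `T` with `T ^ n = 1`. -/
def transfer [Ring K] [Module K V] (T : Module.End K V) (n : ℕ) : Module.End K V :=
  ∑ k ∈ Finset.range n, T ^ k

lemma apply_transfer [Ring K] [Module K V] {T : Module.End K V} {n : ℕ} (hT : T ^ n = 1)
    (v : V) : T (transfer T n v) = transfer T n v := by
  have h : (T - 1) * transfer T n = 0 := by rw [transfer, mul_geom_sum, hT, sub_self]
  simpa [sub_eq_zero] using congr($h v)

lemma transfer_pow_apply [Ring K] [Module K V] {T : Module.End K V} {n : ℕ} (hT : T ^ n = 1)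
    (k : ℕ) (v : V) : transfer T n ((T ^ k) v) = transfer T n v := by
  have hcomm : transfer T n * T ^ k = T ^ k * transfer T n :=
    Commute.sum_left _ _ _ fun j _ => Commute.pow_pow_self T j k
  calc transfer T n ((T ^ k) v) = (T ^ k) (transfer T n v) := congr($hcomm v)
    _ = transfer T n v := by
      rw [Module.End.pow_apply]
      exact Function.iterate_fixed (apply_transfer hT v) k

lemma transfer_apply_of_apply_eq [Ring K] [Module K V] {T : Module.End K V} (n : ℕ) {v : V}
    (hv : T v = v) : transfer T n v = n • v := by
  simp [transfer, Module.End.pow_apply, Function.iterate_fixed hv]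

lemma inf_eqLocus_one_eq_map_transfer [DivisionRing K] [Module K V] {T : Module.End K V} {n : ℕ}
    (hT : T ^ n = 1) (hn : (n : K) ≠ 0) {W : Submodule K V} (hW : W ≤ W.comap T) :
    W ⊓ LinearMap.eqLocus T 1 = W.map (transfer T n) := by
  apply le_antisymm
  · rintro v ⟨hvW, hv⟩
    refine ⟨(n : K)⁻¹ • v, W.smul_mem _ hvW, ?_⟩
    rw [map_smul, transfer_apply_of_apply_eq n hv, ← Nat.cast_smul_eq_nsmul K,
      inv_smul_smul₀ hn]
  · rintro _ ⟨v, hv, rfl⟩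
    refine ⟨?_, apply_transfer hT v⟩
    rw [transfer, LinearMap.sum_apply]
    exact W.sum_mem fun k _ => Module.End.pow_apply_mem_of_forall_mem k hW v hv

end Transfer

section Diagonal

variable {σ R : Type*}

lemma coeff_aeval_C_mul_X [CommSemiring R] (c : σ → R) (p : MvPolynomial σ R) (m : σ →₀ ℕ) :
    coeff m (aeval (fun i => C (c i) * X i) p) = (m.prod fun i k => c i ^ k) * coeff m p := by
  classical
  induction p using MvPolynomial.induction_on' with
  | monomial u a =>
    have h : aeval (fun i => C (c i) * X i) (monomial u a) =
        C (u.prod fun i k => c i ^ k) * monomial u a := by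
      rw [aeval_monomial, algebraMap_eq, monomial_eq]
      simp only [mul_pow, Finsupp.prod, Finset.prod_mul_distrib, map_prod, map_pow, mul_left_comm]
    rw [h, coeff_C_mul, coeff_monomial]
    split_ifs with hum
    · rw [hum]
    · simp only [mul_zero]
  | add p q hp hq => rw [map_add, coeff_add, hp, hq, coeff_add, mul_add]

lemma aeval_C_pow_mul_X_eq_self_iff [CommRing R] [IsDomain R] {ζ : R} {n : ℕ}
    (hζ : IsPrimitiveRoot ζ n) (w : σ → ℕ) (p : MvPolynomial σ R) :
    aeval (fun i => C (ζ ^ w i) * X i) p = p ↔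
      IsWeightedHomogeneous (fun i => (w i : ZMod n)) p 0 := by
  have hprod (m : σ →₀ ℕ) : (m.prod fun i k => (ζ ^ w i) ^ k) = 1 ↔
      Finsupp.weight (fun i => (w i : ZMod n)) m = 0 := by
    simp only [Finsupp.prod, ← pow_mul, Finset.prod_pow_eq_pow_sum, hζ.pow_eq_one_iff_dvd,
      ← ZMod.natCast_eq_zero_iff, Finsupp.weight_apply, Finsupp.sum, nsmul_eq_mul, Nat.cast_sum,
      Nat.cast_mul, mul_comm]
  simp only [MvPolynomial.ext_iff, coeff_aeval_C_mul_X, mul_left_eq_self₀, IsWeightedHomogeneous,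
    hprod, ← or_iff_not_imp_right, ne_eq]

end Diagonal

section ZeroWeight

variable {σ M : Type*} [AddCommMonoid M]

/-- The exponents of the monomials of degree `d` and weight zero. -/
def zeroWeightExponents (w : σ → M) (d : ℕ) : Set (σ →₀ ℕ) :=
  {m | m.degree = d ∧ Finsupp.weight w m = 0}

lemma homogeneousSubmodule_inf_weightedHomogeneousSubmodule_zero (R : Type*) [CommSemiring R]
    (w : σ → M) (d : ℕ) :
    homogeneousSubmodule σ R d ⊓ weightedHomogeneousSubmodule R w 0 =
      restrictSupport R (zeroWeightExponents w d) := by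
  rw [homogeneousSubmodule_eq_finsupp_supported, weightedHomogeneousSubmodule_eq_finsupp_supported]
  exact Submodule.ext fun p => Set.subset_inter_iff.symm

lemma mapDomain_mem_zeroWeightExponents {w : σ → M} {d : ℕ} {f : σ → σ} {c : M}
    (hf : ∀ i, w (f i) = w i + c) (hc : d • c = 0) {m : σ →₀ ℕ}
    (hm : m ∈ zeroWeightExponents w d) : m.mapDomain f ∈ zeroWeightExponents w d := by
  obtain ⟨hdeg, hweight⟩ := hm
  refine ⟨by rw [Finsupp.degree_mapDomain, hdeg], ?_⟩
  calc Finsupp.weight w (m.mapDomain f)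
      = m.sum fun i k => k • (w i + c) := by
        simp [Finsupp.weight_apply, Finsupp.sum_mapDomain_index, add_smul, hf]
    _ = Finsupp.weight w m + m.degree • c := by
        simp only [smul_add, Finset.sum_add_distrib, Finsupp.weight_apply, Finsupp.degree_apply,
          Finset.sum_smul, Finsupp.sum]
    _ = 0 := by rw [hweight, hdeg, hc, add_zero]

lemma restrictSupport_zeroWeightExponents_le_comap_rename {R : Type*} [CommSemiring R]
    {w : σ → M} {d : ℕ} {f : σ → σ} {c : M} (hf : ∀ i, w (f i) = w i + c) (hc : d • c = 0) :
    restrictSupport R (zeroWeightExponents w d) ≤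
      (restrictSupport R (zeroWeightExponents w d)).comap (rename f).toLinearMap := by
  rw [restrictSupport_eq_span, Submodule.span_le]
  rintro _ ⟨m, hm, rfl⟩
  rw [SetLike.mem_coe, Submodule.mem_comap, AlgHom.toLinearMap_apply, rename_monomial]
  exact Submodule.subset_span ⟨_, mapDomain_mem_zeroWeightExponents hf hc hm, rfl⟩

end ZeroWeight

section Translation

variable {G R : Type*} [AddGroup G] [CommSemiring R]

lemma rename_sub_pow (g : G) (k : ℕ) :
    (rename (R := R) (· - g)).toLinearMap ^ k = (rename (· - k • g)).toLinearMap := by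
  induction k with
  | zero =>
    refine LinearMap.ext fun p => ?_
    simp only [zero_smul, sub_zero]
    exact (rename_id_apply p).symm
  | succ k ih =>
    refine LinearMap.ext fun p => ?_
    rw [pow_succ, ih]
    simp [rename_rename, Function.comp_def, ← sub_add_eq_sub_sub_swap, succ_nsmul]

lemma rename_sub_pow_eq_one {g : G} {n : ℕ} (hg : n • g = 0) :
    (rename (R := R) (· - g)).toLinearMap ^ n = 1 := by
  rw [rename_sub_pow, hg, ← zero_nsmul (0 : G), ← rename_sub_pow, pow_zero]

lemma rename_sub_monomial [Finite G] (g : G) (a : G → ℕ) (r : R) :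
    rename (· - g) (monomial (Finsupp.equivFunOnFinite.symm a) r) =
      monomial (Finsupp.equivFunOnFinite.symm fun i => a (i + g)) r := by
  rw [rename_monomial]
  refine congrArg (monomial · r) (Finsupp.ext fun i => ?_)
  have h := Finsupp.mapDomain_apply (sub_left_injective (b := g))
    (Finsupp.equivFunOnFinite.symm a) (i + g)
  rwa [add_sub_cancel_right] at h

end Translation

section Quintic

open Finsupp (equivFunOnFinite)
open scoped Finset

/-- The six generators, `orbitRep j` being the exponent of a monomial of `quinticGenerator j`. -/
noncomputable def quinticGenerator : Fin 6 → MvPolynomial (Fin 5) ℂ := ![θ1, θ2, θ3, η2, η3, η4]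

/-- Representatives, one for each rotation orbit, of the exponents `a` with `∑ aᵢ = 5` and
`∑ i aᵢ ≡ 0 (mod 5)`; they are plain functions so that statements about them are decidable. -/
def orbitRep : Fin 6 → Fin 5 → ℕ :=
  ![![5, 0, 0, 0, 0], ![1, 1, 1, 1, 1], ![3, 1, 0, 0, 1], ![2, 1, 2, 0, 0], ![2, 2, 0, 1, 0],
    ![3, 0, 1, 1, 0]]

/-- The order of the stabilizer of `orbitRep j` under rotation: the factor by which the transfer of
its monomial exceeds the sum over its orbit. -/
def stabilizerOrder : Fin 6 → ℕ := ![1, 5, 1, 1, 1, 1]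

/-- The weight of `zᵢ` under `g₂`, i.e. the exponent in `g₂ zᵢ = ω ^ i zᵢ` modulo `5`. -/
def indexWeight (i : Fin 5) : ZMod 5 := (i : ℕ)

lemma isPrimitiveRoot_ω : IsPrimitiveRoot ω 5 := by
  simpa [ω] using Complex.isPrimitiveRoot_exp 5 (by norm_num)

lemma compG1_eq_rename : compG1 = rename (· - 1) := by
  ext1 i
  simp [compG1]

lemma compG1_pow_five : compG1.toLinearMap ^ 5 = 1 := by
  rw [compG1_eq_rename, rename_sub_pow_eq_one rfl]

lemma compG2_eq_self_iff (p : MvPolynomial (Fin 5) ℂ) :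
    compG2 p = p ↔ IsWeightedHomogeneous indexWeight p 0 :=
  aeval_C_pow_mul_X_eq_self_iff isPrimitiveRoot_ω _ p

lemma homogeneousSubmodule_inf_invariants_eq_map_transfer :
    homogeneousSubmodule (Fin 5) ℂ 5 ⊓ LinearMap.eqLocus compG1.toLinearMap 1 ⊓
        LinearMap.eqLocus compG2.toLinearMap 1 =
      (restrictSupport ℂ (zeroWeightExponents indexWeight 5)).map
        (transfer compG1.toLinearMap 5) := by
  have hG2 : LinearMap.eqLocus compG2.toLinearMap 1 =
      weightedHomogeneousSubmodule ℂ indexWeight 0 := Submodule.ext compG2_eq_self_iff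
  have hstable : restrictSupport ℂ (zeroWeightExponents indexWeight 5) ≤
      (restrictSupport ℂ (zeroWeightExponents indexWeight 5)).comap compG1.toLinearMap := by
    rw [compG1_eq_rename]
    exact restrictSupport_zeroWeightExponents_le_comap_rename (c := -1) (by decide) (by decide)
  rw [inf_right_comm, hG2, homogeneousSubmodule_inf_weightedHomogeneousSubmodule_zero,
    inf_eqLocus_one_eq_map_transfer compG1_pow_five (by norm_num) hstable]

lemma compG1_pow_monomial (k : Fin 5) (a : Fin 5 → ℕ) :
    (compG1.toLinearMap ^ (k : ℕ)) (monomial (equivFunOnFinite.symm a) 1) =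
      monomial (equivFunOnFinite.symm fun i => a (i + k)) 1 := by
  have hk : (k : ℕ) • (1 : Fin 5) = k := by decide +revert
  rw [compG1_eq_rename, rename_sub_pow, AlgHom.toLinearMap_apply, rename_sub_monomial, hk]

lemma transfer_compG1_monomial (a : Fin 5 → ℕ) :
    transfer compG1.toLinearMap 5 (monomial (equivFunOnFinite.symm a) 1) =
      ∑ k, monomial (equivFunOnFinite.symm fun i => a (i + k)) 1 := by
  simp only [transfer, LinearMap.sum_apply, Finset.sum_range, compG1_pow_monomial]

lemma transfer_compG1_monomial_orbitRep (j : Fin 6) :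
    transfer compG1.toLinearMap 5 (monomial (equivFunOnFinite.symm (orbitRep j)) 1) =
      (stabilizerOrder j : ℂ) • quinticGenerator j := by
  rw [transfer_compG1_monomial]
  simp only [Fin.sum_univ_five, monomial_eq, Finsupp.prod_fintype, pow_zero, implies_true,
    Fin.prod_univ_five, Finsupp.coe_equivFunOnFinite_symm, C_1, one_mul, smul_eq_C_mul, map_natCast]
  fin_cases j <;>
    simp [orbitRep, stabilizerOrder, quinticGenerator, θ1, θ2, θ3, η2, η3, η4] <;> ring

lemma stabilizerOrder_ne_zero (j : Fin 6) : (stabilizerOrder j : ℂ) ≠ 0 := by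
  rw [Nat.cast_ne_zero]
  decide +revert

lemma exists_rotate_orbitRep {a : Fin 5 → ℕ} (hdeg : ∑ i, a i = 5)
    (hweight : ∑ i, a i • indexWeight i = 0) :
    ∃ j k, a = fun i => orbitRep j (i + k) := by
  rw [← List.Nat.mem_antidiagonalTuple] at hdeg
  revert a
  decide +kernel

lemma orbitRep_mem_zeroWeightExponents (j : Fin 6) :
    equivFunOnFinite.symm (orbitRep j) ∈ zeroWeightExponents indexWeight 5 := by
  simp only [zeroWeightExponents, Set.mem_ofPred_eq, Finsupp.degree_eq_sum,
    Finsupp.weight_eq_sum, Finsupp.coe_equivFunOnFinite_symm]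
  revert j
  decide

lemma map_transfer_restrictSupport_eq_span :
    (restrictSupport ℂ (zeroWeightExponents indexWeight 5)).map (transfer compG1.toLinearMap 5) =
      Submodule.span ℂ (Set.range quinticGenerator) := by
  rw [restrictSupport_eq_span, Submodule.map_span]
  apply le_antisymm <;> rw [Submodule.span_le]
  · rintro _ ⟨_, ⟨m, ⟨hdeg, hweight⟩, rfl⟩, rfl⟩
    rw [Finsupp.degree_eq_sum] at hdeg
    rw [Finsupp.weight_eq_sum] at hweight
    obtain ⟨j, k, hm⟩ := exists_rotate_orbitRep hdeg hweight
    beta_reduce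
    rw [← Finsupp.equivFunOnFinite_symm_coe m, hm, ← compG1_pow_monomial,
      transfer_pow_apply compG1_pow_five, transfer_compG1_monomial_orbitRep]
    exact Submodule.smul_mem _ _ (Submodule.subset_span ⟨j, rfl⟩)
  · rintro _ ⟨j, rfl⟩
    rw [SetLike.mem_coe, ← Submodule.smul_mem_iff _ (stabilizerOrder_ne_zero j),
      ← transfer_compG1_monomial_orbitRep]
    exact Submodule.subset_span ⟨_, ⟨_, orbitRep_mem_zeroWeightExponents j, rfl⟩, rfl⟩

lemma card_filter_rotate_orbitRep_eq (i j : Fin 6) :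
    #{k | (fun x => orbitRep j (x + k)) = orbitRep i} =
      if i = j then stabilizerOrder j else 0 := by
  decide +revert

lemma coeff_orbitRep_quinticGenerator (i j : Fin 6) :
    coeff (equivFunOnFinite.symm (orbitRep i)) (quinticGenerator j) = if i = j then 1 else 0 := by
  apply mul_left_cancel₀ (stabilizerOrder_ne_zero j)
  rw [← coeff_C_mul, ← smul_eq_C_mul, ← transfer_compG1_monomial_orbitRep,
    transfer_compG1_monomial, coeff_sum, mul_ite, mul_one, mul_zero]
  simp only [coeff_monomial, EmbeddingLike.apply_eq_iff_eq, Finset.sum_boole,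
    card_filter_rotate_orbitRep_eq, Nat.cast_ite, Nat.cast_zero]

lemma linearIndependent_quinticGenerator : LinearIndependent ℂ quinticGenerator :=
  .of_pairwise_dual_eq_zero_one _ (fun i => lcoeff ℂ (equivFunOnFinite.symm (orbitRep i)))
    (fun i j hij => (coeff_orbitRep_quinticGenerator i j).trans (if_neg hij))
    (fun i => (coeff_orbitRep_quinticGenerator i i).trans (if_pos rfl))

end Quintic

/-- The space of invariant homogeneous quintic polynomials is exactly the span of
`θ₁, θ₂, θ₃, η₂, η₃, η₄`; these six are linearly independent, so it has dimension 6. -/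
theorem stmt_5 :
    {p : MvPolynomial (Fin 5) ℂ |
        p ∈ homogeneousSubmodule (Fin 5) ℂ 5 ∧ compG1 p = p ∧ compG2 p = p} =
      ↑(Submodule.span ℂ ({θ1, θ2, θ3, η2, η3, η4} : Set (MvPolynomial (Fin 5) ℂ))) ∧
    LinearIndependent ℂ ![θ1, θ2, θ3, η2, η3, η4] ∧
    Module.finrank ℂ
      ↥(Submodule.span ℂ ({θ1, θ2, θ3, η2, η3, η4} : Set (MvPolynomial (Fin 5) ℂ))) = 6 := by
  have hrange : ({θ1, θ2, θ3, η2, η3, η4} : Set (MvPolynomial (Fin 5) ℂ)) =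
      Set.range quinticGenerator := by
    simp only [quinticGenerator, Matrix.range_cons, Matrix.range_empty, Set.union_empty,
      Set.singleton_union]
  rw [hrange]
  refine ⟨?_, linearIndependent_quinticGenerator, ?_⟩
  · rw [← map_transfer_restrictSupport_eq_span,
      ← homogeneousSubmodule_inf_invariants_eq_map_transfer]
    ext p
    exact and_assoc.symm
  · rw [finrank_span_eq_card linearIndependent_quinticGenerator, Fintype.card_fin]
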